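/- Let B be a supersoluble brace. Then the additive group (B,+) is nilpotent if and only if B = Soc_n(B) for some n ∈ ℕ. -/

import Mathlib

/-- A (skew left) brace: a set with an additive group structure (not necessarily abelian)
and a multiplicative group structure sharing the same identity, satisfying the skew
distributive law `a * (b + c) = a * b + -a + a * c`. -/
class SkewBrace (B : Type*) extends AddGroup B, Group B where
  one_eq_zero : (1 : B) = (0 : B)
  skew_distrib : ∀ a b c : B, a * (b + c) = a * b + -a + a * c

/-- A group is supersoluble if it has a finite chain of normal subgroups with all
factors cyclic. -/
def Group.IsSupersoluble (G : Type*) [Group G] : Prop :=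
  ∃ (n : ℕ) (H : ℕ → Subgroup G),
    H 0 = ⊥ ∧ H n = ⊤ ∧ (∀ i, (H i).Normal) ∧ (∀ i, i < n → H i ≤ H (i + 1)) ∧
    ∀ i, i < n → ∃ x ∈ H (i + 1), ∀ y ∈ H (i + 1), ∃ k : ℤ, (x ^ k)⁻¹ * y ∈ H i

namespace SkewBrace

variable {B : Type*} [SkewBrace B]

/-- `lam a b = -a + a * b`, i.e. `λ_a(b)`. -/
def lam (a b : B) : B := -a + a * b

/-- the star operation `a ∗ b = λ_a(b) - b`. -/
def starOp (a b : B) : B := lam a b + -b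

/-- the additive commutator `[a,b]_+`. -/
def addCommutator (a b : B) : B := -a + -b + a + b

/-- A subbrace of `B`: a subset that is a subgroup of both `(B,+)` and `(B,·)`. -/
structure Subbrace (B : Type*) [SkewBrace B] where
  carrier : Set B
  zero_mem : (0 : B) ∈ carrier
  add_mem : ∀ {a b : B}, a ∈ carrier → b ∈ carrier → a + b ∈ carrier
  neg_mem : ∀ {a : B}, a ∈ carrier → -a ∈ carrier
  mul_mem : ∀ {a b : B}, a ∈ carrier → b ∈ carrier → a * b ∈ carrier
  inv_mem : ∀ {a : B}, a ∈ carrier → a⁻¹ ∈ carrier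

/-- An ideal of `B`: a subbrace that is normal in `(B,+)` and in `(B,·)` and is
invariant under all the maps `λ_b`. -/
structure BraceIdeal (B : Type*) [SkewBrace B] extends Subbrace B where
  addConj_mem : ∀ (b : B) {a : B}, a ∈ carrier → b + a + -b ∈ carrier
  mulConj_mem : ∀ (b : B) {a : B}, a ∈ carrier → b * a * b⁻¹ ∈ carrier
  lam_mem : ∀ (b : B) {a : B}, a ∈ carrier → lam b a ∈ carrier

/-- The additive subgroup underlying a subbrace. -/
def Subbrace.addSubgroup (S : Subbrace B) : AddSubgroup B where
  carrier := S.carrier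
  zero_mem' := S.zero_mem
  add_mem' := S.add_mem
  neg_mem' := S.neg_mem

/-- The multiplicative subgroup underlying a subbrace. -/
def Subbrace.subgroup (S : Subbrace B) : Subgroup B where
  carrier := S.carrier
  one_mem' := by rw [one_eq_zero]; exact S.zero_mem
  mul_mem' := S.mul_mem
  inv_mem' := S.inv_mem

/-- Given ideals `J ≤ I` of `B`, `MemSocQuotRel I J x` says that the coset of `x`
lies in `Soc(I/J) = Ker(λ) ∩ Z(I/J, +)` (for `I = B` take `I = Set.univ`). -/
def MemSocQuotRel (I J : Set B) (x : B) : Prop :=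
  x ∈ I ∧ (∀ y ∈ I, -y + lam x y ∈ J) ∧ ∀ y ∈ I, -(y + x) + (x + y) ∈ J

/-- Given ideals `J ≤ I` of `B`, `MemZetaQuotRel I J x` says that the coset of `x`
lies in `ζ(I/J) = Soc(I/J) ∩ Z(I/J, ·)`. -/
def MemZetaQuotRel (I J : Set B) (x : B) : Prop :=
  MemSocQuotRel I J x ∧ ∀ y ∈ I, (y * x)⁻¹ * (x * y) ∈ J

/-- The coset of `x` lies in `Soc(B/J)`. -/
def MemSocQuot (J : Set B) (x : B) : Prop := MemSocQuotRel Set.univ J x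

/-- The coset of `x` lies in `ζ(B/J)`. -/
def MemZetaQuot (J : Set B) (x : B) : Prop := MemZetaQuotRel Set.univ J x

/-- For ideals `I ≤ J`, the additive group of the quotient `J/I` is infinite cyclic. -/
def QuotAddInfCyclic (I J : Set B) : Prop :=
  ∃ x ∈ J, (∀ y ∈ J, ∃ n : ℤ, -(n • x) + y ∈ I) ∧ ∀ n : ℤ, n • x ∈ I → n = 0

/-- For ideals `I ≤ J`, the quotient `J/I` has prime order `p`. -/
def QuotPrimeOrder (I J : Set B) (p : ℕ) : Prop :=
  p.Prime ∧ ∃ x ∈ J, x ∉ I ∧ p • x ∈ I ∧ ∀ y ∈ J, ∃ n : ℤ, -(n • x) + y ∈ I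

/-- A brace is supersoluble if it has a finite chain of ideals each factor of which
either is additively infinite cyclic and contained in the socle of the corresponding
quotient, or has prime order. -/
def IsSupersoluble (B : Type*) [SkewBrace B] : Prop :=
  ∃ (n : ℕ) (I : ℕ → BraceIdeal B),
    (I 0).carrier = {0} ∧ (I n).carrier = Set.univ ∧
    (∀ i, i < n → (I i).carrier ⊆ (I (i + 1)).carrier) ∧
    ∀ i, i < n →
      (QuotAddInfCyclic (I i).carrier (I (i + 1)).carrier ∧
        ∀ x ∈ (I (i + 1)).carrier, MemSocQuot (I i).carrier x) ∨
      ∃ p : ℕ, QuotPrimeOrder (I i).carrier (I (i + 1)).carrier p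

/-- The upper socle series of the brace (carrier of the ideal) `I`. -/
def socChainRel (I : Set B) : ℕ → Set B
  | 0 => {0}
  | n + 1 => {x | MemSocQuotRel I (socChainRel I n) x}

/-- The upper central series of the brace (carrier of the ideal) `I`. -/
def zetaChainRel (I : Set B) : ℕ → Set B
  | 0 => {0}
  | n + 1 => {x | MemZetaQuotRel I (zetaChainRel I n) x}

/-- The upper socle series `Soc_n(B)` of `B`. -/
def socChain (B : Type*) [SkewBrace B] : ℕ → Set B := socChainRel Set.univ

/-- The upper central series `ζ_n(B)` of `B`. -/
def zetaChain (B : Type*) [SkewBrace B] : ℕ → Set B := zetaChainRel Set.univ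

/-- A brace is centrally nilpotent if its upper central series reaches `B`. -/
def IsCentrallyNilpotent (B : Type*) [SkewBrace B] : Prop :=
  ∃ m : ℕ, zetaChain B m = Set.univ

end SkewBrace

namespace SkewBrace

/-!
The converse is a comparison of two series: `Soc (B/J)` is central in the additive group of `B/J`,
so the upper socle series lies below the upper central series of `(B,+)`.

For the direct implication it suffices that a factor `I/J` of prime order `p` lies in `Soc (B/J)`
when `(B,+)` is nilpotent. Nilpotency makes `I/J` central in `(B/J,+)`. Let `m ∈ I` and suppose
that `d = -b + λ_m(b)`, which lies in `I`, is not in `J`. Then `d` generates `I/J`, so `k • d = -m`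
modulo `J` for some `k`. As `d` is additively central, `λ_m(k • b) = k • b + k • d = -m + k • b`,
i.e. `m * (k • b) = k • b` modulo `J`. Additive and multiplicative cosets of `J` coincide, so
`m ∈ J`, which forces `d ∈ J`, a contradiction.
-/

section Group

variable {G : Type*}

@[to_additive]
theorem subgroup_eq_bot_of_disjoint_center [Group G] [Group.IsNilpotent G] {N : Subgroup G}
    [N.Normal] (hN : Disjoint N (Subgroup.center G)) : N = ⊥ := by
  have disjoint_upper (n : ℕ) : Disjoint N (Subgroup.upperCentralSeries G n) := by
    induction n with
    | zero => exact disjoint_bot_right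
    | succ n ih =>
      rw [Subgroup.disjoint_def] at hN ih ⊢
      intro x hxN hx
      refine hN hxN (Subgroup.mem_center_iff.mpr fun y => ?_)
      refine (commutatorElement_eq_one_iff_mul_comm.mp (ih ?_ ?_)).symm
      · rw [commutatorElement_def, mul_assoc x, mul_assoc x]
        exact N.mul_mem hxN (‹N.Normal›.conj_mem _ (N.inv_mem hxN) y)
      · exact Subgroup.mem_upperCentralSeries_succ_iff.mp hx y
  obtain ⟨n, hn⟩ := Group.IsNilpotent.nilpotent G
  simpa only [hn, disjoint_top] using disjoint_upper n

@[to_additive]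
theorem le_center_of_isSimpleGroup [Group G] [Group.IsNilpotent G] (N : Subgroup G) [N.Normal]
    [IsSimpleGroup N] : N ≤ Subgroup.center G := by
  have center_normal : ((Subgroup.center G).subgroupOf N).Normal := inferInstance
  rcases center_normal.eq_bot_or_eq_top with h | h
  · have hN : N = ⊥ := subgroup_eq_bot_of_disjoint_center (Subgroup.subgroupOf_eq_bot.mp h).symm
    exact hN ▸ bot_le
  · exact Subgroup.subgroupOf_eq_top.mp h

theorem ofAdd_mem_upperCentralSeries_iff [AddGroup G] {n : ℕ} {x : G} :
    Multiplicative.ofAdd x ∈ Subgroup.upperCentralSeries (Multiplicative G) n ↔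
      x ∈ AddSubgroup.upperCentralSeries G n := by
  induction n generalizing x with
  | zero => exact Iff.rfl
  | succ n ih =>
    rw [Subgroup.mem_upperCentralSeries_succ_iff, AddSubgroup.mem_upperCentralSeries_succ_iff]
    exact Multiplicative.forall.trans (forall_congr' fun y => ih)

theorem isNilpotent_multiplicative_iff [AddGroup G] :
    Group.IsNilpotent (Multiplicative G) ↔ AddGroup.IsNilpotent G := by
  have series_eq_top_iff (n : ℕ) : Subgroup.upperCentralSeries (Multiplicative G) n = ⊤ ↔
      AddSubgroup.upperCentralSeries G n = ⊤ := by
    rw [Subgroup.eq_top_iff', AddSubgroup.eq_top_iff', Multiplicative.forall]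
    exact forall_congr' fun _ => ofAdd_mem_upperCentralSeries_iff
  exact ⟨fun ⟨n, hn⟩ => ⟨n, (series_eq_top_iff n).mp hn⟩,
    fun ⟨n, hn⟩ => ⟨n, (series_eq_top_iff n).mpr hn⟩⟩

end Group

section Brace

variable {B : Type*} [SkewBrace B]

theorem mul_eq_add_lam (a b : B) : a * b = a + lam a b :=
  (add_neg_cancel_left a (a * b)).symm

/-- The map `λ_a` as an endomorphism of `(B,+)`. -/
def lamHom (a : B) : B →+ B :=
  AddMonoidHom.mk' (lam a) fun b c => by simp only [lam, skew_distrib, add_assoc]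

theorem lam_neg_add (a b c : B) : lam a (-b + c) = -(a * b) + a * c := by
  change lamHom a (-b + c) = _
  rw [map_add, map_neg]
  change -lam a b + lam a c = _
  simp only [lam, neg_add_rev, neg_neg, add_assoc, add_neg_cancel_left]

theorem lam_zsmul (a : B) (k : ℤ) (b : B) : lam a (k • b) = k • lam a b :=
  map_zsmul (lamHom a) k b

namespace BraceIdeal

variable (I J : BraceIdeal B)

theorem neg_add_mem_iff {b c : B} : -b + c ∈ J.carrier ↔ b⁻¹ * c ∈ J.carrier := by
  constructor <;> intro h
  · have lam_eq : lam b⁻¹ (-b + c) = b⁻¹ * c := by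
      rw [lam_neg_add, inv_mul_cancel, one_eq_zero, neg_zero, zero_add]
    exact lam_eq ▸ J.lam_mem b⁻¹ h
  · have lam_eq : lam b (b⁻¹ * c) = -b + c := by rw [lam, mul_inv_cancel_left]
    exact lam_eq ▸ J.lam_mem b h

theorem neg_add_mul_mem_iff {b m : B} : -b + m * b ∈ J.carrier ↔ m ∈ J.carrier := by
  rw [J.neg_add_mem_iff, ← mul_assoc]
  constructor <;> intro h
  · simpa only [mul_assoc, mul_inv_cancel_left, mul_inv_cancel, mul_one] using J.mulConj_mem b h
  · simpa only [inv_inv] using J.mulConj_mem b⁻¹ h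

theorem neg_add_lam_mem {m : B} (hm : m ∈ J.carrier) (b : B) : -b + lam m b ∈ J.carrier := by
  have conj_mem : -b + -m + b ∈ J.carrier := by
    simpa only [neg_neg] using J.addConj_mem (-b) (J.neg_mem hm)
  simpa only [lam, add_assoc, add_neg_cancel_left] using
    J.add_mem conj_mem ((J.neg_add_mul_mem_iff (b := b)).mpr hm)

instance addSubgroup_normal : J.toSubbrace.addSubgroup.Normal :=
  ⟨fun _ ha b => J.addConj_mem b ha⟩

/-- The additive group of the factor `I/J`, as a subgroup of the additive group of `B/J`. For an
ideal `I` that does not contain `J` this is `(I + J)/J`. -/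
def addFactor : AddSubgroup (B ⧸ J.toSubbrace.addSubgroup) :=
  I.toSubbrace.addSubgroup.map (QuotientAddGroup.mk' J.toSubbrace.addSubgroup)

instance addFactor_normal : (addFactor I J).Normal :=
  I.addSubgroup_normal.map _ (QuotientAddGroup.mk'_surjective _)

variable {I J}

theorem mk_mem_addFactor {x : B} (hx : x ∈ I.carrier) :
    (x : B ⧸ J.toSubbrace.addSubgroup) ∈ addFactor I J :=
  AddSubgroup.mem_map_of_mem _ hx

theorem card_addFactor {p : ℕ} (h : QuotPrimeOrder J.carrier I.carrier p) :
    Nat.card (addFactor I J) = p := by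
  obtain ⟨hp, x, hxI, hxJ, hpx, hgen⟩ := h
  have := Fact.mk hp
  have addFactor_eq : addFactor I J = AddSubgroup.zmultiples ↑x := by
    refine le_antisymm ?_ (AddSubgroup.zmultiples_le_of_mem (mk_mem_addFactor hxI))
    rintro _ ⟨y, hy, rfl⟩
    obtain ⟨n, hn⟩ := hgen y hy
    exact ⟨n, QuotientAddGroup.eq.mpr hn⟩
  have addOrderOf_eq : addOrderOf (x : B ⧸ J.toSubbrace.addSubgroup) = p :=
    addOrderOf_eq_prime ((QuotientAddGroup.eq_zero_iff _).mpr hpx)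
      (mt (QuotientAddGroup.eq_zero_iff _).mp hxJ)
  rw [addFactor_eq, Nat.card_zmultiples, addOrderOf_eq]

theorem exists_zsmul_eq_mk (hp : (Nat.card (addFactor I J)).Prime) {d y : B}
    (hdI : d ∈ I.carrier) (hdJ : d ∉ J.carrier) (hy : y ∈ I.carrier) :
    ∃ k : ℤ, k • (d : B ⧸ J.toSubbrace.addSubgroup) = y := by
  have := Fact.mk hp
  let d' : addFactor I J := ⟨d, mk_mem_addFactor hdI⟩
  have hd' : d' ≠ 0 := fun h => hdJ ((QuotientAddGroup.eq_zero_iff d).mp (congrArg Subtype.val h))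
  obtain ⟨k, hk⟩ := mem_zmultiples_of_prime_card rfl hd' (g' := ⟨y, mk_mem_addFactor hy⟩)
  exact ⟨k, congrArg Subtype.val hk⟩

theorem neg_add_lam_mem_of_le_center (hp : (Nat.card (addFactor I J)).Prime)
    (hcentral : addFactor I J ≤ AddSubgroup.center _) {m : B} (hm : m ∈ I.carrier) (b : B) :
    -b + lam m b ∈ J.carrier := by
  by_contra hdJ
  set d := -b + lam m b
  have hdI : d ∈ I.carrier := I.neg_add_lam_mem hm b
  obtain ⟨k, hk⟩ := exists_zsmul_eq_mk hp hdI hdJ (I.neg_mem hm)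
  have commute {x : B} (hx : x ∈ I.carrier) (y : B ⧸ J.toSubbrace.addSubgroup) :
      AddCommute y x := AddSubgroup.mem_center_iff.mp (hcentral (mk_mem_addFactor hx)) y
  have mk_lam : ((lam m (k • b) : B) : B ⧸ J.toSubbrace.addSubgroup) = ↑(-m) + ↑(k • b) :=
    calc ((lam m (k • b) : B) : B ⧸ J.toSubbrace.addSubgroup)
        = k • (↑b + ↑d) := by rw [lam_zsmul, ← add_neg_cancel_left b (lam m b)]; rfl
      _ = k • ↑b + k • ↑d := (commute hdI ↑b).zsmul_add k
      _ = ↑(k • b) + ↑(-m) := by rw [hk]; rfl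
      _ = ↑(-m) + ↑(k • b) := commute (I.neg_mem hm) _
  have mk_mul : ((k • b : B) : B ⧸ J.toSubbrace.addSubgroup) = ↑(m * (k • b)) :=
    calc ((k • b : B) : B ⧸ J.toSubbrace.addSubgroup)
        = ↑m + (↑(-m) + ↑(k • b)) := by rw [QuotientAddGroup.mk_neg, add_neg_cancel_left]
      _ = ↑(m * (k • b)) := by rw [← mk_lam, mul_eq_add_lam]; rfl
  have hmJ : m ∈ J.carrier := J.neg_add_mul_mem_iff.mp (QuotientAddGroup.eq.mp mk_mul)
  exact hdJ (J.neg_add_lam_mem hmJ b)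

theorem memSocQuot_of_prime_card [AddGroup.IsNilpotent B] (hp : (Nat.card (addFactor I J)).Prime)
    {x : B} (hx : x ∈ I.carrier) : MemSocQuot J.carrier x := by
  have := Fact.mk hp
  have : IsSimpleAddGroup (addFactor I J) := isSimpleAddGroup_of_prime_card rfl
  have hcentral : addFactor I J ≤ AddSubgroup.center _ := le_center_of_isSimpleAddGroup _
  refine ⟨Set.mem_univ x, fun y _ => neg_add_lam_mem_of_le_center hp hcentral hx y, fun y _ => ?_⟩
  exact QuotientAddGroup.eq.mp (AddSubgroup.mem_center_iff.mp (hcentral (mk_mem_addFactor hx)) ↑y)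

end BraceIdeal

theorem MemSocQuot.mono {J K : Set B} (hJK : J ⊆ K) {x : B} (hx : MemSocQuot J x) :
    MemSocQuot K x :=
  ⟨hx.1, fun y hy => hJK (hx.2.1 y hy), fun y hy => hJK (hx.2.2 y hy)⟩

theorem subset_socChain_of_forall_memSocQuot {n : ℕ} {I : ℕ → Set B} (h0 : I 0 = {0})
    (hI : ∀ i < n, ∀ x ∈ I (i + 1), MemSocQuot (I i) x) : I n ⊆ socChain B n := by
  induction n with
  | zero => exact h0.subset
  | succ n ih =>
    exact fun x hx => (hI n n.lt_succ_self x hx).mono (ih fun i hi => hI i (Nat.lt_succ_of_lt hi))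

theorem socChain_subset_upperCentralSeries (n : ℕ) :
    socChain B n ⊆ AddSubgroup.upperCentralSeries B n := by
  induction n with
  | zero => exact subset_rfl
  | succ n ih =>
    intro x hx
    refine neg_mem_iff.mp (AddSubgroup.mem_upperCentralSeries_succ_iff.mpr fun y => ih ?_)
    have addCommutator_eq : -x + y + - -x + -y = -(-y + x) + (x + -y) := by
      simp only [neg_add_rev, neg_neg, add_assoc]
    rw [addCommutatorElement_def, addCommutator_eq]
    exact hx.2.2 (-y) (Set.mem_univ _)

theorem addGroup_nilpotent_iff_finite_multipermutational_level_general {n : ℕ}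
    {I : ℕ → BraceIdeal B} (h0 : (I 0).carrier = {0}) (hn : (I n).carrier = Set.univ)
    (hI : ∀ i < n, (∀ x ∈ (I (i + 1)).carrier, MemSocQuot (I i).carrier x) ∨
      ∃ p : ℕ, QuotPrimeOrder (I i).carrier (I (i + 1)).carrier p) :
    Group.IsNilpotent (Multiplicative B) ↔ ∃ m : ℕ, socChain B m = Set.univ := by
  rw [isNilpotent_multiplicative_iff]
  constructor
  · intro hnil
    have factor_le_soc : ∀ i < n, ∀ x ∈ (I (i + 1)).carrier, MemSocQuot (I i).carrier x := by
      intro i hi x hx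
      rcases hI i hi with hsoc | ⟨p, hp⟩
      · exact hsoc x hx
      · exact BraceIdeal.memSocQuot_of_prime_card (BraceIdeal.card_addFactor hp ▸ hp.1) hx
    have hle := subset_socChain_of_forall_memSocQuot (I := fun i => (I i).carrier) h0 factor_le_soc
    exact ⟨n, Set.univ_subset_iff.mp (hn ▸ hle)⟩
  · rintro ⟨m, hm⟩
    have hle := socChain_subset_upperCentralSeries (B := B) m
    exact ⟨m, SetLike.coe_injective (Set.univ_subset_iff.mp (hm ▸ hle))⟩

end Brace

/-- For a supersoluble brace `B`, the additive group `(B,+)` is nilpotent if and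
only if `B = Soc_n(B)` for some `n`, i.e. `B` has finite multipermutational level. -/
theorem addGroup_nilpotent_iff_finite_multipermutational_level (B : Type*)
    [SkewBrace B] (hB : IsSupersoluble B) :
    Group.IsNilpotent (Multiplicative B) ↔ ∃ n : ℕ, socChain B n = Set.univ := by
  obtain ⟨n, I, h0, hn, -, hI⟩ := hB
  exact addGroup_nilpotent_iff_finite_multipermutational_level_general h0 hn
    fun i hi => (hI i hi).imp_left And.right

end SkewBrace
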